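/- arXiv:2507.02077 — 2 statements merged into one kernel-verified Lean document; each statement's English description precedes it below -/
import Mathlib

section
/- At every point of U, a ( (∂₁a)(∂₁T) + (∂₂a)(∂₂T) ) = −(∂₂a)(∂₁R) + (∂₁a)(∂₂R). -/
/-- Partial derivative in direction `i` of a function on `ℝ²`. -/
noncomputable def pd (i : Fin 2) (f : EuclideanSpace ℝ (Fin 2) → ℝ)
    (x : EuclideanSpace ℝ (Fin 2)) : ℝ :=
  fderiv ℝ f x (EuclideanSpace.single i 1)

/-! Let `J` be the rotation by a right angle, so that `T = Du(J x)` and `R = a Du(x)`. The two sides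
of the identity are `a DT(∇a)` and `DR(J∇a)`. Since `Da(J∇a) = ⟨∇a, J∇a⟩ = 0`, the coefficient `a`
in `R` passes through the derivative, and after cancelling `Du(J∇a)` the identity reduces to
`D²u(∇a, J x) = D²u(J∇a, x)`. Because `a` is radial, `∇a` and `x` are multiples of one vector, so
this is the symmetry of `D²u`. -/

open scoped Gradient RealInnerProductSpace

section LinearVectorField

variable {𝕜 E F : Type*} [NontriviallyNormedField 𝕜] [NormedAddCommGroup E] [NormedSpace 𝕜 E]
  [NormedAddCommGroup F] [NormedSpace 𝕜 F]

theorem differentiableAt_fderiv_of_contDiffAt_two {f : E → F} {x : E} (hf : ContDiffAt 𝕜 2 f x) :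
    DifferentiableAt 𝕜 (fderiv 𝕜 f) x :=
  (hf.fderiv_right (m := 1) (by norm_num)).differentiableAt one_ne_zero

/-- The derivative of `f` along the linear vector field `y ↦ L y`. It serves for the radial
derivative, where `L` is the identity, and for angular derivatives, where `L` is skew. -/
noncomputable def derivAlong (L : E →L[𝕜] E) (f : E → F) (y : E) : F :=
  fderiv 𝕜 f y (L y)

variable {f : E → F} {x : E}

theorem differentiableAt_derivAlong (L : E →L[𝕜] E) (hf : DifferentiableAt 𝕜 (fderiv 𝕜 f) x) :
    DifferentiableAt 𝕜 (derivAlong L f) x :=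
  hf.clm_apply L.differentiableAt

theorem fderiv_derivAlong_apply (L : E →L[𝕜] E) (hf : DifferentiableAt 𝕜 (fderiv 𝕜 f) x) (v : E) :
    fderiv 𝕜 (derivAlong L f) x v = fderiv 𝕜 (fderiv 𝕜 f) x v (L x) + fderiv 𝕜 f x (L v) := by
  have h : HasFDerivAt (derivAlong L f) _ x := hf.hasFDerivAt.clm_apply L.hasFDerivAt
  simp [h.fderiv, add_comm]

end LinearVectorField

section Collinear

variable {E F : Type*} [NormedAddCommGroup E] [NormedSpace ℝ E] [NormedAddCommGroup F]
  [NormedSpace ℝ F] {f : E → F} {x v : E}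

theorem exists_eq_smul_of_collinear_zero (h : Collinear ℝ {0, x, v}) :
    ∃ (w : E) (r s : ℝ), x = r • w ∧ v = s • w := by
  obtain ⟨w, hw⟩ := (collinear_iff_of_mem (p₀ := 0) (Set.mem_insert 0 _)).1 h
  obtain ⟨r, hr⟩ := hw x (by simp)
  obtain ⟨s, hs⟩ := hw v (by simp)
  exact ⟨w, r, s, by simpa using hr, by simpa using hs⟩

theorem fderiv_derivAlong_eq_of_collinear (L : E →L[ℝ] E) (hf : ContDiffAt ℝ 2 f x)
    (hxv : Collinear ℝ {0, x, v}) :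
    fderiv ℝ (derivAlong L f) x v = fderiv ℝ (derivAlong (.id ℝ E) f) x (L v) := by
  have hf' := differentiableAt_fderiv_of_contDiffAt_two hf
  have hsymm : IsSymmSndFDerivAt ℝ f x := hf.isSymmSndFDerivAt (by simp)
  have hHess : fderiv ℝ (fderiv ℝ f) x v (L x) = fderiv ℝ (fderiv ℝ f) x (L v) x := by
    obtain ⟨w, r, s, hx, hv⟩ := exists_eq_smul_of_collinear_zero hxv
    have hLx : s • L x = r • L v := by rw [hx, hv, map_smul, map_smul, smul_comm]
    calc fderiv ℝ (fderiv ℝ f) x v (L x)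
        = fderiv ℝ (fderiv ℝ f) x w (s • L x) := by
          rw [hv, map_smul, map_smul, smul_apply]
      _ = fderiv ℝ (fderiv ℝ f) x (L v) (r • w) := by
          rw [hLx, map_smul, map_smul, hsymm.eq]
      _ = fderiv ℝ (fderiv ℝ f) x (L v) x := by rw [← hx]
  rw [fderiv_derivAlong_apply L hf', fderiv_derivAlong_apply _ hf', hHess]
  rfl

end Collinear

theorem smul_fderiv_derivAlong_gradient {E F : Type*} [NormedAddCommGroup E]
    [InnerProductSpace ℝ E] [CompleteSpace E] [NormedAddCommGroup F] [NormedSpace ℝ F]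
    {a : E → ℝ} {u : E → F} {x : E} {L : E →L[ℝ] E} (hL : ∀ v, ⟪v, L v⟫ = 0)
    (ha : DifferentiableAt ℝ a x) (hu : ContDiffAt ℝ 2 u x) (hrad : Collinear ℝ {0, x, ∇ a x}) :
    a x • fderiv ℝ (derivAlong L u) x (∇ a x) =
      fderiv ℝ (fun y ↦ a y • derivAlong (.id ℝ E) u y) x (L (∇ a x)) := by
  have hu' := differentiableAt_fderiv_of_contDiffAt_two hu
  have ha_level : fderiv ℝ a x (L (∇ a x)) = 0 := by rw [← inner_gradient_left, hL]
  rw [fderiv_fun_smul ha (differentiableAt_derivAlong _ hu')]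
  simp [ha_level, fderiv_derivAlong_eq_of_collinear L hu hrad]

section Plane

/-- The rotation `J` of `ℝ²` by a right angle, whose vector field `x ↦ J x` generates the angular
derivative. It is counterclockwise, so that `J x = (-x₂, x₁)`. -/
noncomputable def quarterTurn : EuclideanSpace ℝ (Fin 2) →L[ℝ] EuclideanSpace ℝ (Fin 2) :=
  Matrix.toEuclideanCLM (n := Fin 2) (𝕜 := ℝ) !![0, -1; 1, 0]

theorem quarterTurn_apply (v : EuclideanSpace ℝ (Fin 2)) : quarterTurn v = !₂[-v 1, v 0] := by
  ext i
  fin_cases i <;> simp [quarterTurn, Matrix.ofLp_toEuclideanCLM, Matrix.mulVec, dotProduct]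

theorem inner_self_quarterTurn (v : EuclideanSpace ℝ (Fin 2)) : ⟪v, quarterTurn v⟫ = 0 := by
  simp [quarterTurn_apply, PiLp.inner_apply, mul_comm]

theorem norm_sq_smul_eq_inner_smul_add (x v : EuclideanSpace ℝ (Fin 2)) :
    ‖x‖ ^ 2 • v = ⟪v, x⟫ • x + ⟪v, quarterTurn x⟫ • quarterTurn x := by
  ext i
  fin_cases i <;>
    simp [quarterTurn_apply, PiLp.inner_apply, EuclideanSpace.norm_sq_eq] <;> ring

theorem collinear_of_inner_quarterTurn_eq_zero {x v : EuclideanSpace ℝ (Fin 2)}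
    (h : ⟪v, quarterTurn x⟫ = 0) : Collinear ℝ {0, x, v} := by
  obtain rfl | hx := eq_or_ne x 0
  · simpa using collinear_pair ℝ 0 v
  have hv : v = (⟪v, x⟫ / ‖x‖ ^ 2) • x := by
    rw [div_eq_inv_mul, mul_smul, eq_inv_smul_iff₀ (by positivity),
      norm_sq_smul_eq_inner_smul_add, h, zero_smul, add_zero]
  rw [collinear_iff_of_mem (p₀ := 0) (Set.mem_insert 0 _)]
  refine ⟨x, ?_⟩
  rintro p (rfl | rfl | rfl)
  · exact ⟨0, by simp⟩
  · exact ⟨1, by simp⟩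
  · exact ⟨_, by simpa using hv⟩

variable (f : EuclideanSpace ℝ (Fin 2) → ℝ) (x : EuclideanSpace ℝ (Fin 2))

theorem gradient_apply_eq_pd (i : Fin 2) : ∇ f x i = pd i f x := by
  simp [pd, ← inner_gradient_left, EuclideanSpace.inner_single_right]

theorem fderiv_apply_eq_pd (v : EuclideanSpace ℝ (Fin 2)) :
    fderiv ℝ f x v = v 0 * pd 0 f x + v 1 * pd 1 f x := by
  simp [← inner_gradient_left, PiLp.inner_apply, gradient_apply_eq_pd]

theorem derivAlong_quarterTurn_eq_pd :
    derivAlong quarterTurn f x = -(x 1) * pd 0 f x + x 0 * pd 1 f x := by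
  simp [derivAlong, fderiv_apply_eq_pd, quarterTurn_apply]

theorem derivAlong_id_eq_pd :
    derivAlong (.id ℝ _) f x = x 0 * pd 0 f x + x 1 * pd 1 f x :=
  fderiv_apply_eq_pd f x x

end Plane

theorem stmt5_general {a u T R : EuclideanSpace ℝ (Fin 2) → ℝ} {x : EuclideanSpace ℝ (Fin 2)}
    (ha : DifferentiableAt ℝ a x) (hrad : -(x 1) * pd 0 a x + x 0 * pd 1 a x = 0)
    (hu : ContDiffAt ℝ 2 u x)
    (hT : ∀ y, T y = -(y 1) * pd 0 u y + y 0 * pd 1 u y)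
    (hR : ∀ y, R y = a y * (y 0 * pd 0 u y + y 1 * pd 1 u y)) :
    a x * (pd 0 a x * pd 0 T x + pd 1 a x * pd 1 T x)
      = -(pd 1 a x) * pd 0 R x + pd 0 a x * pd 1 R x := by
  have hT' : T = derivAlong quarterTurn u :=
    funext fun y ↦ (hT y).trans (derivAlong_quarterTurn_eq_pd u y).symm
  have hR' : R = fun y ↦ a y • derivAlong (.id ℝ _) u y :=
    funext fun y ↦ by rw [hR, derivAlong_id_eq_pd, smul_eq_mul]
  have hcol : Collinear ℝ {0, x, ∇ a x} := by
    apply collinear_of_inner_quarterTurn_eq_zero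
    rw [inner_gradient_left, ← derivAlong, derivAlong_quarterTurn_eq_pd, hrad]
  have hgrad : a x * fderiv ℝ T x (∇ a x) = fderiv ℝ R x (quarterTurn (∇ a x)) := by
    rw [hT', hR', ← smul_eq_mul]
    exact smul_fderiv_derivAlong_gradient inner_self_quarterTurn ha hu hcol
  simpa [fderiv_apply_eq_pd, quarterTurn_apply, gradient_apply_eq_pd] using hgrad

/-- Lemma 3.2, second identity: `a (a₁ T₁ + a₂ T₂) = −a₂ R₁ + a₁ R₂` on `U`. -/
theorem stmt5 (U : Set (EuclideanSpace ℝ (Fin 2))) (hU : IsOpen U)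
    (a u : EuclideanSpace ℝ (Fin 2) → ℝ)
    (ha : ContDiffOn ℝ (⊤ : ℕ∞) a U) (hapos : ∀ x ∈ U, 0 < a x)
    (hrad : ∀ x ∈ U, -(x 1) * pd 0 a x + x 0 * pd 1 a x = 0)
    (hu : ContDiffOn ℝ (⊤ : ℕ∞) u U)
    (heq : ∀ x ∈ U, a x * (pd 0 (pd 0 u) x + pd 1 (pd 1 u) x)
      + (pd 0 a x * pd 0 u x + pd 1 a x * pd 1 u x) = 0)
    (T R : EuclideanSpace ℝ (Fin 2) → ℝ)
    (hT : ∀ x, T x = -(x 1) * pd 0 u x + x 0 * pd 1 u x)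
    (hR : ∀ x, R x = a x * (x 0 * pd 0 u x + x 1 * pd 1 u x)) :
    ∀ x ∈ U, a x * (pd 0 a x * pd 0 T x + pd 1 a x * pd 1 T x)
      = -(pd 1 a x) * pd 0 R x + pd 0 a x * pd 1 R x := by
  exact fun x hx ↦ stmt5_general ((ha.contDiffAt (hU.mem_nhds hx)).differentiableAt (by simp))
    (hrad x hx) ((hu.contDiffAt (hU.mem_nhds hx)).of_le (WithTop.coe_le_coe.2 le_top)) hT hR
end

section
/- Let α, β ∈ ℝ be not both zero and set v := α T + β R. Then at every point of U, Δv = ((β²a² − α²)/(β²a² + α²)) · (1/a) · ( (∂₁a)(∂₁v) + (∂₂a)(∂₂v) ) + (2αβ/(β²a² + α²)) · ( (∂₂a)(∂₁v) − (∂₁a)(∂₂v) ). -/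
/-
If `a` is radial and `div (a ∇u) = 0`, then the angular derivative `T` of `u` and the weighted
radial derivative `R` satisfy the generalized Cauchy–Riemann system `∂₁R = -a ∂₂T`, `∂₂R = a ∂₁T`.
Cross-differentiating this system gives `a ΔT = -∇a · ∇T` and `ΔR = ∂₂a ∂₁T - ∂₁a ∂₂T`.  The system
also gives `∇v = M ∇T` with `M = [[α, -βa], [βa, α]]`, of determinant `β²a² + α² ≠ 0`; substituting
`∇T = M⁻¹ ∇v` in `Δv = α ΔT + β ΔR` yields the equation for `v`.
-/

open Filter Topology

theorem eventually_differentiableAt_of_contDiffAt {E F : Type*} [NormedAddCommGroup E]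
    [NormedSpace ℝ E] [NormedAddCommGroup F] [NormedSpace ℝ F] {f : E → F} {x : E}
    {n : WithTop ℕ∞} (hf : ContDiffAt ℝ n f x) (hn : 1 ≤ n) :
    ∀ᶠ y in 𝓝 x, DifferentiableAt ℝ f y :=
  ((hf.of_le hn).eventually (by simp)).mono fun _ hy => hy.differentiableAt (by simp)

section PartialDerivatives

variable {f g : EuclideanSpace ℝ (Fin 2) → ℝ} {x : EuclideanSpace ℝ (Fin 2)}

theorem pd_congr (h : f =ᶠ[𝓝 x] g) (i : Fin 2) : pd i f x = pd i g x := by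
  rw [pd, pd, h.fderiv_eq]

theorem pd_add (hf : DifferentiableAt ℝ f x) (hg : DifferentiableAt ℝ g x) (i : Fin 2) :
    pd i (fun y => f y + g y) x = pd i f x + pd i g x := by
  simp [pd, fderiv_fun_add hf hg]

theorem pd_neg (f : EuclideanSpace ℝ (Fin 2) → ℝ) (x : EuclideanSpace ℝ (Fin 2)) (i : Fin 2) :
    pd i (fun y => -f y) x = -pd i f x := by
  simp [pd, fderiv_fun_neg]

theorem pd_mul (hf : DifferentiableAt ℝ f x) (hg : DifferentiableAt ℝ g x) (i : Fin 2) :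
    pd i (fun y => f y * g y) x = pd i f x * g x + f x * pd i g x := by
  simp [pd, fderiv_fun_mul hf hg, add_comm, mul_comm]

theorem pd_const_mul (c : ℝ) (hf : DifferentiableAt ℝ f x) (i : Fin 2) :
    pd i (fun y => c * f y) x = c * pd i f x := by
  simp [pd, fderiv_const_mul hf]

theorem pd_linearCombination (hf : DifferentiableAt ℝ f x) (hg : DifferentiableAt ℝ g x)
    (c d : ℝ) (i : Fin 2) :
    pd i (fun y => c * f y + d * g y) x = c * pd i f x + d * pd i g x := by
  rw [pd_add (hf.const_mul c) (hg.const_mul d), pd_const_mul c hf, pd_const_mul d hg]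

theorem pd_pd_linearCombination (hf : ∀ᶠ y in 𝓝 x, DifferentiableAt ℝ f y)
    (hg : ∀ᶠ y in 𝓝 x, DifferentiableAt ℝ g y) {j : Fin 2}
    (hf' : DifferentiableAt ℝ (pd j f) x) (hg' : DifferentiableAt ℝ (pd j g) x)
    (c d : ℝ) (i : Fin 2) :
    pd i (pd j fun y => c * f y + d * g y) x = c * pd i (pd j f) x + d * pd i (pd j g) x := by
  have h : pd j (fun y => c * f y + d * g y) =ᶠ[𝓝 x] fun y => c * pd j f y + d * pd j g y := by
    filter_upwards [hf, hg] with y hfy hgy using pd_linearCombination hfy hgy c d j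
  rw [pd_congr h, pd_linearCombination hf' hg']

theorem pd_coord (i j : Fin 2) (x : EuclideanSpace ℝ (Fin 2)) :
    pd i (fun y => y j) x = if j = i then 1 else 0 := by
  have h : fderiv ℝ (fun y : EuclideanSpace ℝ (Fin 2) => y j) x = EuclideanSpace.proj (𝕜 := ℝ) j :=
    (EuclideanSpace.proj (𝕜 := ℝ) j : EuclideanSpace ℝ (Fin 2) →L[ℝ] ℝ).fderiv
  simp [pd, h]

theorem contDiffAt_pd {m n : WithTop ℕ∞} (hf : ContDiffAt ℝ n f x) (hmn : m + 1 ≤ n) (i : Fin 2) :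
    ContDiffAt ℝ m (pd i f) x :=
  (hf.fderiv_right hmn).clm_apply contDiffAt_const

theorem fderiv_eq_sum_pd (f : EuclideanSpace ℝ (Fin 2) → ℝ) (x : EuclideanSpace ℝ (Fin 2)) :
    fderiv ℝ f x = ∑ i, pd i f x • EuclideanSpace.proj (𝕜 := ℝ) i := by
  refine ContinuousLinearMap.coe_injective ((EuclideanSpace.basisFun (Fin 2) ℝ).toBasis.ext ?_)
  intro j
  fin_cases j <;> simp [pd]

theorem differentiableAt_fderiv_of_pd (hf : ∀ i, DifferentiableAt ℝ (pd i f) x) :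
    DifferentiableAt ℝ (fderiv ℝ f) x := by
  rw [funext (fderiv_eq_sum_pd f)]
  fun_prop

-- This version is for `R`: the derivative of `a` in `∂₁R = -a ∂₂T`, `∂₂R = a ∂₁T` may be
-- discontinuous, and then `R` is not `C²`.
theorem pd_comm (hf : ∀ᶠ y in 𝓝 x, DifferentiableAt ℝ f y)
    (hpd : ∀ i, DifferentiableAt ℝ (pd i f) x) (i j : Fin 2) :
    pd i (pd j f) x = pd j (pd i f) x := by
  have hf' := differentiableAt_fderiv_of_pd hpd
  have pd_pd (k l : Fin 2) : pd k (pd l f) x =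
      fderiv ℝ (fderiv ℝ f) x (EuclideanSpace.single k 1) (EuclideanSpace.single l 1) := by
    have h := hf'.hasFDerivAt.clm_apply (hasFDerivAt_const (EuclideanSpace.single l (1 : ℝ)) x)
    rw [pd, show pd l f = fun y => fderiv ℝ f y (EuclideanSpace.single l 1) from rfl, h.fderiv]
    simp
  rw [pd_pd, pd_pd]
  exact second_derivative_symmetric_of_eventually (hf.mono fun y hy => hy.hasFDerivAt)
    hf'.hasFDerivAt _ _

theorem differentiableAt_pd (hf : ContDiffAt ℝ 2 f x) (i : Fin 2) : DifferentiableAt ℝ (pd i f) x :=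
  (contDiffAt_pd (m := 1) hf (by norm_num) i).differentiableAt (by simp)

theorem pd_comm_of_contDiffAt (hf : ContDiffAt ℝ 2 f x) (i j : Fin 2) :
    pd i (pd j f) x = pd j (pd i f) x :=
  pd_comm (eventually_differentiableAt_of_contDiffAt hf (by norm_num))
    (differentiableAt_pd hf) i j

end PartialDerivatives

/-- The derivative `-x₂ ∂₁f + x₁ ∂₂f` along the rotation field (`pd 0` is `∂₁`): `a` is radial
when `angularDeriv a = 0`, and `T = angularDeriv u`. -/
noncomputable def angularDeriv (f : EuclideanSpace ℝ (Fin 2) → ℝ)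
    (x : EuclideanSpace ℝ (Fin 2)) : ℝ :=
  -(x 1) * pd 0 f x + x 0 * pd 1 f x

/-- The derivative `x₁ ∂₁f + x₂ ∂₂f` along the Euler field, without the factor `1 / |x|`, so
that `R = a * radialDeriv u`. -/
noncomputable def radialDeriv (f : EuclideanSpace ℝ (Fin 2) → ℝ)
    (x : EuclideanSpace ℝ (Fin 2)) : ℝ :=
  x 0 * pd 0 f x + x 1 * pd 1 f x

section PolarDerivatives

variable {f : EuclideanSpace ℝ (Fin 2) → ℝ} {x : EuclideanSpace ℝ (Fin 2)}

theorem contDiffAt_angularDeriv {m n : WithTop ℕ∞} (hf : ContDiffAt ℝ n f x) (hmn : m + 1 ≤ n) :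
    ContDiffAt ℝ m (angularDeriv f) x := by
  have h (i : Fin 2) := contDiffAt_pd hf hmn i
  unfold angularDeriv
  fun_prop

theorem contDiffAt_radialDeriv {m n : WithTop ℕ∞} (hf : ContDiffAt ℝ n f x) (hmn : m + 1 ≤ n) :
    ContDiffAt ℝ m (radialDeriv f) x := by
  have h (i : Fin 2) := contDiffAt_pd hf hmn i
  unfold radialDeriv
  fun_prop

theorem pd_zero_angularDeriv (hf : ContDiffAt ℝ 2 f x) :
    pd 0 (angularDeriv f) x = angularDeriv (pd 0 f) x + pd 1 f x := by
  have hpd := differentiableAt_pd hf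
  unfold angularDeriv
  rw [pd_add (by fun_prop) (by fun_prop), pd_mul (by fun_prop) (hpd 0),
    pd_mul (by fun_prop) (hpd 1), pd_neg, pd_coord, pd_coord, pd_comm_of_contDiffAt hf 1 0]
  simp only [one_ne_zero, reduceIte]
  ring

theorem pd_one_angularDeriv (hf : ContDiffAt ℝ 2 f x) :
    pd 1 (angularDeriv f) x = angularDeriv (pd 1 f) x - pd 0 f x := by
  have hpd := differentiableAt_pd hf
  unfold angularDeriv
  rw [pd_add (by fun_prop) (by fun_prop), pd_mul (by fun_prop) (hpd 0),
    pd_mul (by fun_prop) (hpd 1), pd_neg, pd_coord, pd_coord, pd_comm_of_contDiffAt hf 1 0]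
  simp only [zero_ne_one, reduceIte]
  ring

theorem pd_radialDeriv (hf : ContDiffAt ℝ 2 f x) (i : Fin 2) :
    pd i (radialDeriv f) x = radialDeriv (pd i f) x + pd i f x := by
  have hpd := differentiableAt_pd hf
  unfold radialDeriv
  rw [pd_add (by fun_prop) (by fun_prop), pd_mul (by fun_prop) (hpd 0),
    pd_mul (by fun_prop) (hpd 1), pd_coord, pd_coord, pd_comm_of_contDiffAt hf i 0,
    pd_comm_of_contDiffAt hf i 1]
  fin_cases i <;> simp <;> ring

end PolarDerivatives

/-- The generalized Cauchy–Riemann system `∂₁R = -a ∂₂T`, `∂₂R = a ∂₁T` on `U`: the function `R` is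
conjugate to `T` with respect to the weight `a`. Cross-differentiating the system eliminates
either function from the second derivatives of the other. -/
structure IsConjugateOn (a T R : EuclideanSpace ℝ (Fin 2) → ℝ)
    (U : Set (EuclideanSpace ℝ (Fin 2))) : Prop where
  pd_zero : ∀ x ∈ U, pd 0 R x = -(a x * pd 1 T x)
  pd_one : ∀ x ∈ U, pd 1 R x = a x * pd 0 T x

theorem isConjugateOn_angularDeriv_mul_radialDeriv {U : Set (EuclideanSpace ℝ (Fin 2))}
    (hU : IsOpen U) {a u : EuclideanSpace ℝ (Fin 2) → ℝ} (ha : DifferentiableOn ℝ a U)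
    (hrad : ∀ x ∈ U, angularDeriv a x = 0) (hu : ContDiffOn ℝ 2 u U)
    (heq : ∀ x ∈ U, a x * (pd 0 (pd 0 u) x + pd 1 (pd 1 u) x)
      + (pd 0 a x * pd 0 u x + pd 1 a x * pd 1 u x) = 0) :
    IsConjugateOn a (angularDeriv u) (fun x => a x * radialDeriv u x) U := by
  have pd_weighted {x} (hx : x ∈ U) (i : Fin 2) : pd i (fun y => a y * radialDeriv u y) x =
      pd i a x * radialDeriv u x + a x * (radialDeriv (pd i u) x + pd i u x) := by
    have hux := hu.contDiffAt (hU.mem_nhds hx)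
    have hradial : ContDiffAt ℝ 1 (radialDeriv u) x := contDiffAt_radialDeriv hux (by norm_num)
    rw [pd_mul (ha.differentiableAt (hU.mem_nhds hx)) (hradial.differentiableAt (by simp)),
      pd_radialDeriv hux]
  refine ⟨fun x hx => ?_, fun x hx => ?_⟩
  · have hux := hu.contDiffAt (hU.mem_nhds hx)
    rw [pd_weighted hx, pd_one_angularDeriv hux]
    simp only [radialDeriv, angularDeriv, pd_comm_of_contDiffAt hux 1 0] at hrad ⊢
    linear_combination x 0 * heq x hx - pd 1 u x * hrad x hx
  · have hux := hu.contDiffAt (hU.mem_nhds hx)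
    rw [pd_weighted hx, pd_zero_angularDeriv hux]
    simp only [radialDeriv, angularDeriv, pd_comm_of_contDiffAt hux 1 0] at hrad ⊢
    linear_combination x 1 * heq x hx + pd 0 u x * hrad x hx

namespace IsConjugateOn

variable {a T R : EuclideanSpace ℝ (Fin 2) → ℝ} {U : Set (EuclideanSpace ℝ (Fin 2))}
  {x : EuclideanSpace ℝ (Fin 2)}

theorem pd_pd_zero (h : IsConjugateOn a T R U) (hU : U ∈ 𝓝 x) (ha : DifferentiableAt ℝ a x)
    (hT : DifferentiableAt ℝ (pd 1 T) x) (i : Fin 2) :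
    pd i (pd 0 R) x = -(pd i a x * pd 1 T x + a x * pd i (pd 1 T) x) := by
  rw [pd_congr (eventually_of_mem hU h.pd_zero), pd_neg, pd_mul ha hT]

theorem pd_pd_one (h : IsConjugateOn a T R U) (hU : U ∈ 𝓝 x) (ha : DifferentiableAt ℝ a x)
    (hT : DifferentiableAt ℝ (pd 0 T) x) (i : Fin 2) :
    pd i (pd 1 R) x = pd i a x * pd 0 T x + a x * pd i (pd 0 T) x := by
  rw [pd_congr (eventually_of_mem hU h.pd_one), pd_mul ha hT]

theorem differentiableAt_pd_right (h : IsConjugateOn a T R U) (hU : U ∈ 𝓝 x)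
    (ha : DifferentiableAt ℝ a x) (hT : ∀ i, DifferentiableAt ℝ (pd i T) x) (i : Fin 2) :
    DifferentiableAt ℝ (pd i R) x := by
  fin_cases i
  · exact (ha.fun_mul (hT 1)).fun_neg.congr_of_eventuallyEq (eventually_of_mem hU h.pd_zero)
  · exact (ha.fun_mul (hT 0)).congr_of_eventuallyEq (eventually_of_mem hU h.pd_one)

theorem mul_laplacian_left (h : IsConjugateOn a T R U) (hU : U ∈ 𝓝 x)
    (ha : DifferentiableAt ℝ a x) (hT : ∀ i, DifferentiableAt ℝ (pd i T) x)
    (hR : DifferentiableOn ℝ R U) :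
    a x * (pd 0 (pd 0 T) x + pd 1 (pd 1 T) x) =
      -(pd 0 a x * pd 0 T x + pd 1 a x * pd 1 T x) := by
  have hcomm : pd 0 (pd 1 R) x = pd 1 (pd 0 R) x :=
    pd_comm (hR.eventually_differentiableAt hU) (h.differentiableAt_pd_right hU ha hT) 0 1
  rw [h.pd_pd_one hU ha (hT 0), h.pd_pd_zero hU ha (hT 1)] at hcomm
  linear_combination hcomm

theorem laplacian_right (h : IsConjugateOn a T R U) (hU : U ∈ 𝓝 x)
    (ha : DifferentiableAt ℝ a x) (hT : ContDiffAt ℝ 2 T x) :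
    pd 0 (pd 0 R) x + pd 1 (pd 1 R) x = pd 1 a x * pd 0 T x - pd 0 a x * pd 1 T x := by
  rw [h.pd_pd_zero hU ha (differentiableAt_pd hT 1), h.pd_pd_one hU ha (differentiableAt_pd hT 0),
    pd_comm_of_contDiffAt hT 0 1]
  ring

theorem sq_add_sq_mul_pd_zero_left (h : IsConjugateOn a T R U) (hx : x ∈ U)
    (hT : DifferentiableAt ℝ T x) (hR : DifferentiableAt ℝ R x) (α β : ℝ) :
    (β ^ 2 * a x ^ 2 + α ^ 2) * pd 0 T x =
      α * pd 0 (fun y => α * T y + β * R y) x + β * a x * pd 1 (fun y => α * T y + β * R y) x := by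
  rw [pd_linearCombination hT hR, pd_linearCombination hT hR, h.pd_zero x hx, h.pd_one x hx]
  ring

theorem sq_add_sq_mul_pd_one_left (h : IsConjugateOn a T R U) (hx : x ∈ U)
    (hT : DifferentiableAt ℝ T x) (hR : DifferentiableAt ℝ R x) (α β : ℝ) :
    (β ^ 2 * a x ^ 2 + α ^ 2) * pd 1 T x =
      α * pd 1 (fun y => α * T y + β * R y) x - β * a x * pd 0 (fun y => α * T y + β * R y) x := by
  rw [pd_linearCombination hT hR, pd_linearCombination hT hR, h.pd_zero x hx, h.pd_one x hx]
  ring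

theorem mul_laplacian_linearCombination (h : IsConjugateOn a T R U) (hU : U ∈ 𝓝 x)
    (ha : DifferentiableAt ℝ a x) (hT : ContDiffAt ℝ 2 T x) (hR : DifferentiableOn ℝ R U)
    (α β : ℝ) :
    a x * (pd 0 (pd 0 fun y => α * T y + β * R y) x + pd 1 (pd 1 fun y => α * T y + β * R y) x) =
      -α * (pd 0 a x * pd 0 T x + pd 1 a x * pd 1 T x)
        + β * a x * (pd 1 a x * pd 0 T x - pd 0 a x * pd 1 T x) := by
  have hTd := differentiableAt_pd hT
  have hRd := h.differentiableAt_pd_right hU ha hTd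
  have hT' := eventually_differentiableAt_of_contDiffAt hT (by norm_num)
  have hR' := hR.eventually_differentiableAt hU
  rw [pd_pd_linearCombination hT' hR' (hTd 0) (hRd 0),
    pd_pd_linearCombination hT' hR' (hTd 1) (hRd 1)]
  linear_combination α * h.mul_laplacian_left hU ha hTd hR + β * a x * h.laplacian_right hU ha hT

theorem laplacian_linearCombination (h : IsConjugateOn a T R U) (hU : U ∈ 𝓝 x)
    (ha : DifferentiableAt ℝ a x) (ha₀ : a x ≠ 0) (hT : ContDiffAt ℝ 2 T x)
    (hR : DifferentiableOn ℝ R U) {α β : ℝ} (hαβ : (α, β) ≠ (0, 0))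
    {v : EuclideanSpace ℝ (Fin 2) → ℝ} (hv : ∀ y, v y = α * T y + β * R y) :
    pd 0 (pd 0 v) x + pd 1 (pd 1 v) x
      = ((β ^ 2 * (a x) ^ 2 - α ^ 2) / (β ^ 2 * (a x) ^ 2 + α ^ 2)) * (1 / a x)
          * (pd 0 a x * pd 0 v x + pd 1 a x * pd 1 v x)
        + (2 * α * β / (β ^ 2 * (a x) ^ 2 + α ^ 2))
          * (pd 1 a x * pd 0 v x - pd 0 a x * pd 1 v x) := by
  have hD : β ^ 2 * a x ^ 2 + α ^ 2 ≠ 0 := by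
    rcases eq_or_ne α 0 with rfl | hα
    · have hβ : β ≠ 0 := by simpa using hαβ
      positivity
    · positivity
  have hxU := mem_of_mem_nhds hU
  have hTx := hT.differentiableAt (by simp)
  have hRx := hR.differentiableAt hU
  have hT₀ : pd 0 T x = (α * pd 0 v x + β * a x * pd 1 v x) / (β ^ 2 * a x ^ 2 + α ^ 2) := by
    rw [eq_div_iff_mul_eq hD, mul_comm, h.sq_add_sq_mul_pd_zero_left hxU hTx hRx, ← funext hv]
  have hT₁ : pd 1 T x = (α * pd 1 v x - β * a x * pd 0 v x) / (β ^ 2 * a x ^ 2 + α ^ 2) := by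
    rw [eq_div_iff_mul_eq hD, mul_comm, h.sq_add_sq_mul_pd_one_left hxU hTx hRx, ← funext hv]
  have hΔv := h.mul_laplacian_linearCombination hU ha hT hR α β
  rw [← funext hv, hT₀, hT₁] at hΔv
  refine mul_left_cancel₀ ha₀ (hΔv.trans ?_)
  field_simp
  ring

end IsConjugateOn

theorem stmt6_general {U : Set (EuclideanSpace ℝ (Fin 2))} (hU : IsOpen U)
    {a u : EuclideanSpace ℝ (Fin 2) → ℝ} (ha : DifferentiableOn ℝ a U) (ha₀ : ∀ x ∈ U, a x ≠ 0)
    (hrad : ∀ x ∈ U, angularDeriv a x = 0) (hu : ContDiffOn ℝ 3 u U)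
    (heq : ∀ x ∈ U, a x * (pd 0 (pd 0 u) x + pd 1 (pd 1 u) x)
      + (pd 0 a x * pd 0 u x + pd 1 a x * pd 1 u x) = 0)
    {α β : ℝ} (hαβ : (α, β) ≠ (0, 0)) {v : EuclideanSpace ℝ (Fin 2) → ℝ}
    (hv : ∀ x, v x = α * angularDeriv u x + β * (a x * radialDeriv u x)) :
    ∀ x ∈ U, pd 0 (pd 0 v) x + pd 1 (pd 1 v) x
      = ((β ^ 2 * (a x) ^ 2 - α ^ 2) / (β ^ 2 * (a x) ^ 2 + α ^ 2)) * (1 / a x)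
          * (pd 0 a x * pd 0 v x + pd 1 a x * pd 1 v x)
        + (2 * α * β / (β ^ 2 * (a x) ^ 2 + α ^ 2))
          * (pd 1 a x * pd 0 v x - pd 0 a x * pd 1 v x) := by
  intro x hx
  have hconj := isConjugateOn_angularDeriv_mul_radialDeriv hU ha hrad (hu.of_le (by norm_num)) heq
  have hT : ContDiffAt ℝ 2 (angularDeriv u) x :=
    contDiffAt_angularDeriv (hu.contDiffAt (hU.mem_nhds hx)) (by norm_num)
  have hR : DifferentiableOn ℝ (fun y => a y * radialDeriv u y) U := fun y hy =>
    have hradial : ContDiffAt ℝ 2 (radialDeriv u) y :=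
      contDiffAt_radialDeriv (hu.contDiffAt (hU.mem_nhds hy)) (by norm_num)
    (ha y hy).fun_mul (hradial.differentiableAt (by simp)).differentiableWithinAt
  exact hconj.laplacian_linearCombination (hU.mem_nhds hx) (ha.differentiableAt (hU.mem_nhds hx))
    (ha₀ x hx) hT hR hαβ hv

/-- Lemma 3.3: the equation satisfied by the linear combination `v = αT + βR`. -/
theorem stmt6 (U : Set (EuclideanSpace ℝ (Fin 2))) (hU : IsOpen U)
    (a u : EuclideanSpace ℝ (Fin 2) → ℝ)
    (ha : ContDiffOn ℝ (⊤ : ℕ∞) a U) (hapos : ∀ x ∈ U, 0 < a x)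
    (hrad : ∀ x ∈ U, -(x 1) * pd 0 a x + x 0 * pd 1 a x = 0)
    (hu : ContDiffOn ℝ (⊤ : ℕ∞) u U)
    (heq : ∀ x ∈ U, a x * (pd 0 (pd 0 u) x + pd 1 (pd 1 u) x)
      + (pd 0 a x * pd 0 u x + pd 1 a x * pd 1 u x) = 0)
    (T R : EuclideanSpace ℝ (Fin 2) → ℝ)
    (hT : ∀ x, T x = -(x 1) * pd 0 u x + x 0 * pd 1 u x)
    (hR : ∀ x, R x = a x * (x 0 * pd 0 u x + x 1 * pd 1 u x))
    (α β : ℝ) (hαβ : (α, β) ≠ (0, 0))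
    (v : EuclideanSpace ℝ (Fin 2) → ℝ)
    (hv : ∀ x, v x = α * T x + β * R x) :
    ∀ x ∈ U, pd 0 (pd 0 v) x + pd 1 (pd 1 v) x
      = ((β ^ 2 * (a x) ^ 2 - α ^ 2) / (β ^ 2 * (a x) ^ 2 + α ^ 2)) * (1 / a x)
          * (pd 0 a x * pd 0 v x + pd 1 a x * pd 1 v x)
        + (2 * α * β / (β ^ 2 * (a x) ^ 2 + α ^ 2))
          * (pd 1 a x * pd 0 v x - pd 0 a x * pd 1 v x) := by
  obtain rfl := funext hT
  obtain rfl := funext hR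
  exact stmt6_general hU (ha.differentiableOn (by simp)) (fun x hx => (hapos x hx).ne') hrad
    (hu.of_le (WithTop.coe_le_coe.2 le_top)) heq hαβ hv
end
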